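/- Let M be a finite monoid and A a finite alphabet with a morphism φ : A* → M, and let # map idempotents of M to idempotents satisfying (E#)# = E# and E·E# = E#·E = E#. Suppose idempotent iteration strictly decreases the J-class whenever E# ≠ E. Then for every word w ∈ A* and every k > 3 there exists a k-decomposition tree for w with respect to M of height at most 3·|M|². -/

import Mathlib

inductive DTree (A M : Type*) : Type _
  | leaf (a : A)
  | prod (l r : DTree A M)
  | idem (E : M) (children : List (DTree A M))
  | iter (E : M) (children : List (DTree A M))

namespace DTree

mutual
def word {A M : Type*} : DTree A M → List A
  | leaf a => [a]
  | prod l r => word l ++ word r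
  | idem _ cs => wordList cs
  | iter _ cs => wordList cs

def wordList {A M : Type*} : List (DTree A M) → List A
  | [] => []
  | c :: cs => word c ++ wordList cs
end

mutual
def height {A M : Type*} : DTree A M → ℕ
  | leaf _ => 1
  | prod l r => max (height l) (height r) + 1
  | idem _ cs => heightList cs + 1
  | iter _ cs => heightList cs + 1

def heightList {A M : Type*} : List (DTree A M) → ℕ
  | [] => 0
  | c :: cs => max (height c) (heightList cs)
end

def typ {A M : Type*} [Monoid M] (φ : A → M) (sharp : M → M) : DTree A M → M
  | leaf a => φ a
  | prod l r => typ φ sharp l * typ φ sharp r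
  | idem E _ => E
  | iter E _ => sharp E

inductive Valid {A M : Type*} [Monoid M] (φ : A → M) (sharp : M → M) (k : ℕ) :
    DTree A M → Prop
  | leaf (a : A) : Valid φ sharp k (DTree.leaf a)
  | prod {l r : DTree A M} : Valid φ sharp k l → Valid φ sharp k r →
      Valid φ sharp k (DTree.prod l r)
  | idem {E : M} {cs : List (DTree A M)} : cs ≠ [] → cs.length < k →
      E * E = E → (∀ c ∈ cs, Valid φ sharp k c) → (∀ c ∈ cs, typ φ sharp c = E) →
      Valid φ sharp k (DTree.idem E cs)
  | iter {E : M} {cs : List (DTree A M)} : k ≤ cs.length →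
      E * E = E → (∀ c ∈ cs, Valid φ sharp k c) → (∀ c ∈ cs, typ φ sharp c = E) →
      Valid φ sharp k (DTree.iter E cs)

end DTree
theorem aux_pow {M : Type*} [Monoid M] [Finite M] (x : M) :
    ∃ n : ℕ, 0 < n ∧ x ^ n * x ^ n = x ^ n := by
  obtain ⟨a, b, hab, h⟩ := Finite.exists_ne_map_eq_of_infinite (fun n : ℕ => x ^ n)
  wlog hlt : a < b generalizing a b
  · exact this b a hab.symm h.symm (by omega)
  obtain ⟨p, rfl⟩ : ∃ p, b = a + p := ⟨b - a, by omega⟩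
  have hp : 0 < p := by omega
  have h2 : ∀ q c, a ≤ c → x ^ (c + q * p) = x ^ c := by
    intro q
    induction q with
    | zero => simp
    | succ q ih =>
      intro c hc
      have : x ^ (c + p) = x ^ c := by
        obtain ⟨d, rfl⟩ : ∃ d, c = d + a := ⟨c - a, by omega⟩
        rw [add_assoc, pow_add, ← h, ← pow_add]
      rw [add_mul, one_mul, ← add_assoc, add_right_comm, ih (c + p) (by omega), this]
  refine ⟨(a + 1) * p, by positivity, ?_⟩
  rw [← pow_add]
  apply h2
  nlinarith
section Aux
set_option linter.unusedSectionVars false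
variable {A M : Type*} [Monoid M]

theorem aux_stabL [Finite M] (u y α β : M) (h : u = α * (y * u) * β) : ∃ x, u = x * (y * u) := by
  obtain ⟨n, hn, hid⟩ : ∃ n : ℕ, 0 < n ∧ (α * y) ^ n * (α * y) ^ n = (α * y) ^ n := aux_pow (α * y)
  have key : ∀ m : ℕ, u = (α * y) ^ m * u * β ^ m := by
    intro m
    induction m with
    | zero => simp
    | succ m ih =>
      calc u = (α * y) ^ m * u * β ^ m := ih
        _ = (α * y) ^ m * (α * (y * u) * β) * β ^ m := by rw [← h]
        _ = _ := by rw [pow_succ, pow_succ']; simp only [mul_assoc]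
  have h1 : (α * y) ^ n * u = u := by
    calc (α * y) ^ n * u = (α * y) ^ n * ((α * y) ^ n * u * β ^ n) := by rw [← key n]
      _ = ((α * y) ^ n * (α * y) ^ n) * u * β ^ n := by simp only [mul_assoc]
      _ = u := by rw [hid, ← key n]
  obtain ⟨m, rfl⟩ : ∃ m, n = m + 1 := ⟨n - 1, by omega⟩
  refine ⟨(α * y) ^ m * α, ?_⟩
  conv_lhs => rw [← h1, pow_succ]
  simp only [mul_assoc]

theorem aux_stabR [Finite M] (u y α β : M) (h : u = α * (u * y) * β) : ∃ x, u = u * y * x := by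
  obtain ⟨n, hn, hid⟩ : ∃ n : ℕ, 0 < n ∧ (y * β) ^ n * (y * β) ^ n = (y * β) ^ n := aux_pow (y * β)
  have key : ∀ m : ℕ, u = α ^ m * u * (y * β) ^ m := by
    intro m
    induction m with
    | zero => simp
    | succ m ih =>
      calc u = α ^ m * u * (y * β) ^ m := ih
        _ = α ^ m * (α * (u * y) * β) * (y * β) ^ m := by rw [← h]
        _ = _ := by rw [pow_succ, pow_succ']; simp only [mul_assoc]
  have h1 : u * (y * β) ^ n = u := by
    calc u * (y * β) ^ n = (α ^ n * u * (y * β) ^ n) * (y * β) ^ n := by rw [← key n]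
      _ = α ^ n * u * ((y * β) ^ n * (y * β) ^ n) := by simp only [mul_assoc]
      _ = u := by rw [hid, ← key n]
  obtain ⟨m, rfl⟩ : ∃ m, n = m + 1 := ⟨n - 1, by omega⟩
  refine ⟨β * (y * β) ^ m, ?_⟩
  conv_lhs => rw [← h1, pow_succ']
  simp only [mul_assoc]

variable (φ : A → M) (sharp : M → M) (k : ℕ)

structure ACtx (I I' : Set M) : Prop where
  idl : ∀ x ∈ I, ∀ m m', m * x * m' ∈ I
  idl' : ∀ x ∈ I', ∀ m m', m * x * m' ∈ I'
  sub : I' ⊆ I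
  J : ∀ x ∈ I, x ∉ I' → ∀ y ∈ I, y ∉ I' → ∃ m m', x = m * y * m'
  sh : ∀ x ∈ I, x ∉ I' → x * x = x → sharp x = x ∨ sharp x ∈ I'

def AGood (h : ℕ) (t : DTree A M) : Prop := DTree.Valid φ sharp k t ∧ t.height ≤ h

def tp (l : List (DTree A M)) : M := (l.map (DTree.typ φ sharp)).prod

theorem wl_append (l l' : List (DTree A M)) :
    DTree.wordList (l ++ l') = DTree.wordList l ++ DTree.wordList l' := by
  induction l with
  | nil => simp [DTree.wordList]
  | cons a l ih => simp [DTree.wordList, ih]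

theorem wl_single (t : DTree A M) : DTree.wordList [t] = t.word := by
  simp [DTree.wordList]

theorem hl_le (l : List (DTree A M)) (h : ℕ) (hl : ∀ t ∈ l, t.height ≤ h) :
    DTree.heightList l ≤ h := by
  induction l with
  | nil => simp [DTree.heightList]
  | cons a l ih =>
    simp only [DTree.heightList]
    exact max_le (hl a (by simp)) (ih fun t ht => hl t (by simp [ht]))

theorem AGood.mono {φ : A → M} {sharp : M → M} {k : ℕ} {h h' : ℕ} {t : DTree A M}
    (H : AGood φ sharp k h t) (hh : h ≤ h') : AGood φ sharp k h' t := ⟨H.1, H.2.trans hh⟩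

theorem AGood.prod {φ : A → M} {sharp : M → M} {k : ℕ} {h₁ h₂ h : ℕ} {t t' : DTree A M}
    (H : AGood φ sharp k h₁ t) (H' : AGood φ sharp k h₂ t') (e₁ : h₁ + 1 ≤ h) (e₂ : h₂ + 1 ≤ h) :
    AGood φ sharp k h (DTree.prod t t') := by
  refine ⟨.prod H.1 H'.1, ?_⟩
  have := H.2
  have := H'.2
  simp only [DTree.height]
  omega

theorem tp_append (l l' : List (DTree A M)) :
    tp φ sharp (l ++ l') = tp φ sharp l * tp φ sharp l' := by simp [tp]

theorem tp_cons (t : DTree A M) (l' : List (DTree A M)) :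
    tp φ sharp (t :: l') = t.typ φ sharp * tp φ sharp l' := by simp [tp]

theorem tp_single (t : DTree A M) : tp φ sharp [t] = t.typ φ sharp := by simp [tp]

theorem ACtx.tp_mem {sharp : M → M} {I I' : Set M} (C : ACtx sharp I I') (l : List (DTree A M)) (hl : l ≠ [])
    (h : ∀ t ∈ l, t.typ φ sharp ∈ I) : tp φ sharp l ∈ I := by
  cases l with
  | nil => exact absurd rfl hl
  | cons a l =>
    rw [tp_cons]
    have := C.idl _ (h a (by simp)) 1 (tp φ sharp l)
    simpa using this

theorem ACtx.mulR {sharp : M → M} {I I' : Set M} (C : ACtx sharp I I') {x : M} (hx : x ∈ I) (m : M) :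
    x * m ∈ I := by simpa using C.idl x hx 1 m
theorem ACtx.mulL {sharp : M → M} {I I' : Set M} (C : ACtx sharp I I') {x : M} (hx : x ∈ I) (m : M) :
    m * x ∈ I := by simpa using C.idl x hx m 1
theorem ACtx.mulR' {sharp : M → M} {I I' : Set M} (C : ACtx sharp I I') {x : M} (hx : x ∈ I') (m : M) :
    x * m ∈ I' := by simpa using C.idl' x hx 1 m
theorem ACtx.mulL' {sharp : M → M} {I I' : Set M} (C : ACtx sharp I I') {x : M} (hx : x ∈ I') (m : M) :
    m * x ∈ I' := by simpa using C.idl' x hx m 1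

/-- a nonempty block of trees with the same idempotent type -/
theorem block (I' : Set M) (P : M → Prop) (hP : ∀ m m', P m → P m' → m = m')
    (hPi : ∀ m, P m → m * m = m) (hPs : ∀ m, P m → sharp m = m ∨ sharp m ∈ I')
    (h : ℕ) (B : List (DTree A M)) (hB : B ≠ [])
    (hg : ∀ t ∈ B, AGood φ sharp k h t) (hp : ∀ t ∈ B, P (t.typ φ sharp)) :
    ∃ t, AGood φ sharp k (h + 1) t ∧ t.word = DTree.wordList B ∧
      (t.typ φ sharp = tp φ sharp B ∨ t.typ φ sharp ∈ I') := by
  obtain ⟨b, hb⟩ := List.exists_mem_of_ne_nil B hB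
  set E := b.typ φ sharp with hE
  have hPE : P E := hp b hb
  have hall : ∀ t ∈ B, t.typ φ sharp = E := fun t ht => hP _ _ (hp t ht) hPE
  have hEE := hPi _ hPE
  have htp : tp φ sharp B = E := by
    have : ∀ B : List (DTree A M), B ≠ [] → (∀ t ∈ B, t.typ φ sharp = E) → tp φ sharp B = E := by
      intro B
      induction B with
      | nil => simp
      | cons a B ih =>
        intro _ hB
        rw [tp_cons, hB a (by simp)]
        by_cases hn : B = []
        · subst hn; simp [tp]
        · rw [ih hn (fun t ht => hB t (by simp [ht])), hEE]
    exact this B hB hall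
  have hh := hl_le B h (fun t ht => (hg t ht).2)
  by_cases hk : B.length < k
  · refine ⟨.idem E B, ⟨.idem hB hk hEE (fun t ht => (hg t ht).1) hall, ?_⟩, ?_, ?_⟩
    · simp only [DTree.height]; omega
    · simp [DTree.word]
    · left; simp [DTree.typ, htp]
  · refine ⟨.iter E B, ⟨.iter (by omega) hEE (fun t ht => (hg t ht).1) hall, ?_⟩, ?_, ?_⟩
    · simp only [DTree.height]; omega
    · simp [DTree.word]
    · rcases hPs _ hPE with h | h
      · left; simp [DTree.typ, htp, h]
      · right; simpa [DTree.typ] using h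

theorem split_first {α : Type*} (p : α → Prop) (N : List α) :
    (∀ t ∈ N, p t) ∨ ∃ B x N', N = B ++ x :: N' ∧ (∀ t ∈ B, p t) ∧ ¬ p x := by
  induction N with
  | nil => left; simp
  | cons a N ih =>
    by_cases ha : p a
    · rcases ih with h | ⟨B, x, N', rfl, h1, h2⟩
      · left; simpa [ha] using h
      · right; exact ⟨a :: B, x, N', by simp, by simpa [ha] using h1, h2⟩
    · right; exact ⟨[], a, N, by simp, by simp, ha⟩

theorem absorbR {I I' : Set M} (C : ACtx sharp I I') (P : M → Prop) (hP : ∀ m m', P m → P m' → m = m')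
    (hPi : ∀ m, P m → m * m = m) (hPs : ∀ m, P m → sharp m = m ∨ sharp m ∈ I')
    (h : ℕ) (R : List (DTree A M)) (hR : R = [] ∨ ∃ r, R = [r]) (hRg : ∀ t ∈ R, AGood φ sharp k h t)
    (n : ℕ) : ∀ (N : List (DTree A M)) (x : DTree A M), N.length ≤ n → AGood φ sharp k (h + 3) x →
      x.typ φ sharp ∈ I' → (∀ t ∈ N, AGood φ sharp k h t) →
      (∀ t ∈ N, P (t.typ φ sharp) ∨ t.typ φ sharp ∈ I') →
      ∃ L, L ≠ [] ∧ (∀ t ∈ L, AGood φ sharp k (h + 4) t ∧ t.typ φ sharp ∈ I') ∧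
        DTree.wordList L = x.word ++ (DTree.wordList N ++ DTree.wordList R) := by
  induction n with
  | zero =>
    intro N x hN hx hxI _ _
    obtain rfl : N = [] := by simpa using hN
    rcases hR with rfl | ⟨r, rfl⟩
    · exact ⟨[x], by simp, by simpa using ⟨hx.mono (by omega), hxI⟩, by simp [DTree.wordList]⟩
    · refine ⟨[.prod x r], by simp, ?_, by simp [DTree.wordList, DTree.word]⟩
      simp only [List.mem_singleton, forall_eq]
      exact ⟨hx.prod (hRg r (by simp)) (by omega) (by omega), C.mulR' hxI _⟩
  | succ n ih =>
    intro N x hN hx hxI hNg hNP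
    rcases split_first (fun t : DTree A M => P (t.typ φ sharp)) N with hall | ⟨B, y, N', rfl, hB, hy⟩
    · by_cases hN0 : N = []
      · exact ih N x (by simp [hN0]) hx hxI hNg hNP
      obtain ⟨b, hb, hbw, -⟩ := block φ sharp k I' P hP hPi hPs h N hN0 hNg hall
      rcases hR with rfl | ⟨r, rfl⟩
      · refine ⟨[.prod x b], by simp, ?_, by simp [DTree.wordList, DTree.word, hbw]⟩
        simp only [List.mem_singleton, forall_eq]
        exact ⟨hx.prod hb (by omega) (by omega), C.mulR' hxI _⟩
      · refine ⟨[.prod x (.prod b r)], by simp, ?_, by simp [DTree.wordList, DTree.word, hbw]⟩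
        simp only [List.mem_singleton, forall_eq]
        exact ⟨hx.prod (hb.prod (h := h + 2) (hRg r (by simp)) (by omega) (by omega)) (by omega) (by omega),
          C.mulR' hxI _⟩
    · have hyI : y.typ φ sharp ∈ I' := (hNP y (by simp)).resolve_left hy
      have hyg := hNg y (by simp)
      have : ∃ y', AGood φ sharp k (h + 3) y' ∧ y'.typ φ sharp ∈ I' ∧
          y'.word = DTree.wordList B ++ y.word := by
        by_cases hB0 : B = []
        · subst hB0
          exact ⟨y, hyg.mono (by omega), hyI, by simp [DTree.wordList]⟩
        · obtain ⟨b, hb, hbw, -⟩ := block φ sharp k I' P hP hPi hPs h B hB0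
            (fun t ht => hNg t (by simp [ht])) hB
          exact ⟨.prod b y, hb.prod hyg (by omega) (by omega), C.mulL' hyI _, by simp [DTree.word, hbw]⟩
      obtain ⟨y', hy'g, hy'I, hy'w⟩ := this
      obtain ⟨L, hL0, hL, hLw⟩ := ih N' y' (by simp at hN; omega) hy'g hy'I
        (fun t ht => hNg t (by simp [ht])) (fun t ht => hNP t (by simp [ht]))
      refine ⟨x :: L, by simp, ?_, ?_⟩
      · intro t ht
        rcases List.mem_cons.1 ht with rfl | ht
        · exact ⟨hx.mono (by omega), hxI⟩
        · exact hL t ht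
      · simp [DTree.wordList, hLw, hy'w, wl_append]

def AOut (I' : Set M) (H : ℕ) (l : List (DTree A M)) : Prop :=
  (∃ t, AGood φ sharp k H t ∧ t.word = DTree.wordList l ∧ t.typ φ sharp = tp φ sharp l) ∨
  (∃ L, L ≠ [] ∧ (∀ t ∈ L, AGood φ sharp k H t ∧ t.typ φ sharp ∈ I') ∧
    DTree.wordList L = DTree.wordList l)

theorem combine {I I' : Set M} (C : ACtx sharp I I') (P : M → Prop) (hP : ∀ m m', P m → P m' → m = m')
    (hPi : ∀ m, P m → m * m = m) (hPs : ∀ m, P m → sharp m = m ∨ sharp m ∈ I')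
    (h : ℕ) (f g N R : List (DTree A M)) (hf : AOut φ sharp k I' h f)
    (hR : R = [] ∨ ∃ r, R = [r]) (hRg : ∀ t ∈ R, AGood φ sharp k h t)
    (hNg : ∀ t ∈ N, AGood φ sharp k h t)
    (hNP : ∀ t ∈ N, P (t.typ φ sharp) ∨ t.typ φ sharp ∈ I')
    (hw : DTree.wordList N ++ DTree.wordList R = DTree.wordList g)
    (hex : (∀ t ∈ N, P (t.typ φ sharp)) → R ≠ [] ∧ tp φ sharp N * tp φ sharp R = tp φ sharp g) :
    AOut φ sharp k I' (h + 4) (f ++ g) := by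
  rcases hf with ⟨t0, h0g, h0w, h0t⟩ | ⟨L0, hL0, hL0g, hL0w⟩
  · rcases split_first (fun t : DTree A M => P (t.typ φ sharp)) N with hall | ⟨B, y, N', rfl, hB, hy⟩
    · obtain ⟨hR0, htp⟩ := hex hall
      obtain ⟨r, rfl⟩ := hR.resolve_left hR0
      by_cases hN0 : N = []
      · subst hN0
        left
        refine ⟨.prod t0 r, h0g.prod (hRg r (by simp)) (by omega) (by omega), ?_, ?_⟩
        · rw [wl_append, ← hw, ← h0w]; simp [DTree.word, DTree.wordList]
        · rw [tp_append, ← htp, ← h0t]; simp [DTree.typ, tp]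
      · obtain ⟨b, hb, hbw, hbt⟩ := block φ sharp k I' P hP hPi hPs h N hN0 hNg hall
        have hG : AGood φ sharp k (h + 4) (.prod (.prod t0 b) r) :=
          (h0g.prod (h := h + 2) hb (by omega) (by omega)).prod (hRg r (by simp)) (by omega) (by omega)
        have hW : (DTree.prod (.prod t0 b) r).word = DTree.wordList (f ++ g) := by
          rw [wl_append, ← hw, ← h0w]; simp [DTree.word, hbw, DTree.wordList]
        rcases hbt with hbt | hbt
        · left
          refine ⟨_, hG, hW, ?_⟩
          rw [tp_append, ← htp, ← h0t, tp_single]; simp [DTree.typ, hbt, mul_assoc]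
        · right
          refine ⟨[_], by simp, ?_, (wl_single _).trans hW⟩
          simp only [List.mem_singleton, forall_eq]
          exact ⟨hG, C.mulR' (C.mulL' hbt _) _⟩
    · right
      have hyI : y.typ φ sharp ∈ I' := (hNP y (by simp)).resolve_left hy
      have hyg := hNg y (by simp)
      have : ∃ y', AGood φ sharp k (h + 3) y' ∧ y'.typ φ sharp ∈ I' ∧
          y'.word = t0.word ++ (DTree.wordList B ++ y.word) := by
        by_cases hB0 : B = []
        · subst hB0
          exact ⟨.prod t0 y, h0g.prod hyg (by omega) (by omega), C.mulL' hyI _,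
            by simp [DTree.wordList, DTree.word]⟩
        · obtain ⟨b, hb, hbw, -⟩ := block φ sharp k I' P hP hPi hPs h B hB0
            (fun t ht => hNg t (by simp [ht])) hB
          exact ⟨.prod (.prod t0 b) y, (h0g.prod (h := h + 2) hb (by omega) (by omega)).prod hyg
            (by omega) (by omega), C.mulL' hyI _, by simp [DTree.word, hbw]⟩
      obtain ⟨y', hy'g, hy'I, hy'w⟩ := this
      obtain ⟨L, hL0, hL, hLw⟩ := absorbR φ sharp k C P hP hPi hPs h R hR hRg N'.length N' y' le_rfl
        hy'g hy'I (fun t ht => hNg t (by simp [ht])) (fun t ht => hNP t (by simp [ht]))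
      refine ⟨L, hL0, hL, ?_⟩
      rw [hLw, wl_append, ← hw, hy'w, h0w]
      simp [wl_append, DTree.wordList]
  · right
    obtain ⟨L1, x, rfl⟩ : ∃ L1 x, L0 = L1 ++ [x] :=
      ⟨L0.dropLast, L0.getLast hL0, (List.dropLast_append_getLast hL0).symm⟩
    have hx := hL0g x (by simp)
    obtain ⟨L, hL0, hL, hLw⟩ := absorbR φ sharp k C P hP hPi hPs h R hR hRg N.length N x le_rfl
        (hx.1.mono (by omega)) hx.2 hNg hNP
    refine ⟨L1 ++ L, by simp [hL0], ?_, ?_⟩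
    · intro t ht
      rcases List.mem_append.1 ht with ht | ht
      · have := hL0g t (by simp [ht])
        exact ⟨this.1.mono (by omega), this.2⟩
      · exact hL t ht
    · rw [wl_append, hLw, wl_append, ← hw, ← hL0w, wl_append, wl_single]
      simp

def AR (b : M) : Set M := {x | ∃ m, x = b * m}

theorem AR_mul [Finite M] {I I' : Set M} (C : ACtx sharp I I') (a z : M) (ha : a ∈ I) (haz : a * z ∉ I') :
    AR (a * z) = AR a := by
  have ha' : a ∉ I' := fun h => haz (C.mulR' h _)
  obtain ⟨m, m', h⟩ := C.J a ha ha' (a * z) (C.mulR ha _) haz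
  obtain ⟨x, hx⟩ := aux_stabR a z m m' h
  ext y
  constructor
  · rintro ⟨n, rfl⟩; exact ⟨z * n, by rw [mul_assoc]⟩
  · rintro ⟨n, rfl⟩; exact ⟨x * n, by rw [← mul_assoc, ← hx]⟩

def AP (I I' : Set M) (s : M) (ρ : Set M) (m : M) : Prop := s * m = s ∧ m ∈ I ∧ m ∉ I' ∧ AR m = ρ

theorem AP_L [Finite M] {I I' : Set M} (C : ACtx sharp I I') (s : M) (ρ : Set M) (hs : s ∈ I) (hs' : s ∉ I')
    (m m' : M) (h : AP I I' s ρ m) (h' : s * m' = s) : m * m' = m := by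
  obtain ⟨h1, h2, h3, h4⟩ := h
  obtain ⟨α, β, e⟩ := C.J m h2 h3 s hs hs'
  rw [← h1] at e
  obtain ⟨x, hx⟩ := aux_stabL m s α β e
  rw [h1] at hx
  conv_lhs => rw [hx]
  rw [mul_assoc, h', ← hx]

theorem AP_uniq [Finite M] {I I' : Set M} (C : ACtx sharp I I') (s : M) (ρ : Set M) (hs : s ∈ I) (hs' : s ∉ I')
    (m m' : M) (h : AP I I' s ρ m) (h' : AP I I' s ρ m') : m = m' := by
  have e1 : m * m' = m := AP_L sharp C s ρ hs hs' m m' h h'.1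
  have e3 : m * m = m := AP_L sharp C s ρ hs hs' m m h h.1
  have : m' ∈ AR m := by rw [h.2.2.2, ← h'.2.2.2]; exact ⟨1, by simp⟩
  obtain ⟨z, hz⟩ := this
  rw [← e1]
  conv_rhs => rw [hz, ← e3, mul_assoc, ← hz]

def ACuts (S : Set (M × Set M)) (s : M) (l : List (DTree A M)) : Prop :=
  ∀ f b g, f ≠ [] → l = f ++ b :: g → (s * tp φ sharp f, AR (b.typ φ sharp)) ∈ S

theorem first_cut (S : Set (M × Set M)) (c : M × Set M) (s : M) (l : List (DTree A M))
    (h : ACuts φ sharp (insert c S) s l) : ACuts φ sharp S s l ∨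
    ∃ f b g, f ≠ [] ∧ l = f ++ b :: g ∧ ACuts φ sharp S s f ∧ (s * tp φ sharp f, AR (b.typ φ sharp)) = c := by
  by_cases hc : ACuts φ sharp S s l
  · exact Or.inl hc
  right
  have key : ∀ n, ∀ f b g, f.length ≤ n → f ≠ [] → l = f ++ b :: g →
      (s * tp φ sharp f, AR (b.typ φ sharp)) = c →
      ∃ f b g, f ≠ [] ∧ l = f ++ b :: g ∧ ACuts φ sharp S s f ∧ (s * tp φ sharp f, AR (b.typ φ sharp)) = c := by
    intro n
    induction n with
    | zero => intro f b g hf hf0; simp at hf; exact absurd hf hf0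
    | succ n ih =>
      intro f b g hf hf0 hl he
      by_cases hcf : ACuts φ sharp S s f
      · exact ⟨f, b, g, hf0, hl, hcf, he⟩
      · simp only [ACuts] at hcf
        push Not at hcf
        obtain ⟨f', b', g', h0, rfl, hn⟩ := hcf
        have hl' : l = f' ++ b' :: (g' ++ b :: g) := by simp [hl]
        have := h f' b' _ h0 hl'
        refine ih f' b' _ ?_ h0 hl' (this.resolve_right hn)
        simp at hf; omega
  simp only [ACuts] at hc
  push Not at hc
  obtain ⟨f', b', g', h0, hl, hn⟩ := hc
  exact key _ f' b' g' le_rfl h0 hl ((h f' b' _ h0 hl).resolve_right hn)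

theorem ACuts.left {φ : A → M} {sharp : M → M} {S : Set (M × Set M)} {s : M} {f g : List (DTree A M)}
    (h : ACuts φ sharp S s (f ++ g)) : ACuts φ sharp S s f := by
  intro f' b g' h0 e
  exact h f' b (g' ++ g) h0 (by simp [e])

theorem ACuts.right {φ : A → M} {sharp : M → M} {S : Set (M × Set M)} {s : M} {f g : List (DTree A M)}
    (h : ACuts φ sharp S s (f ++ g)) : ACuts φ sharp S (s * tp φ sharp f) g := by
  intro f' b g' h0 e
  have := h (f ++ f') b g' (by simp [h0]) (by simp [e])
  rwa [tp_append, ← mul_assoc] at this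

theorem gdecomp [Finite M] {I I' : Set M} (C : ACtx sharp I I') (h0 h : ℕ) (S : Set (M × Set M)) (s : M) (ρ : Set M)
    (IH : ∀ s l, l ≠ [] → (∀ t ∈ l, AGood φ sharp k h0 t ∧ t.typ φ sharp ∈ I) → tp φ sharp l ∉ I' →
      s * tp φ sharp l ∉ I' → ACuts φ sharp S s l → AOut φ sharp k I' h l) (n : ℕ) :
    ∀ (b : DTree A M) (g : List (DTree A M)), g.length ≤ n →
      (∀ t ∈ b :: g, AGood φ sharp k h0 t ∧ t.typ φ sharp ∈ I) →
      tp φ sharp (b :: g) ∉ I' → s * tp φ sharp (b :: g) ∉ I' →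
      ACuts φ sharp (insert (s, ρ) S) s (b :: g) → AR (b.typ φ sharp) = ρ →
      ∃ N R, (R = [] ∨ ∃ r, R = [r]) ∧ (∀ t ∈ R, AGood φ sharp k h t) ∧
        (∀ t ∈ N, AGood φ sharp k h t) ∧
        (∀ t ∈ N, AP I I' s ρ (t.typ φ sharp) ∨ t.typ φ sharp ∈ I') ∧
        (DTree.wordList N ++ DTree.wordList R = DTree.wordList (b :: g)) ∧
        ((∀ t ∈ N, AP I I' s ρ (t.typ φ sharp)) →
          R ≠ [] ∧ tp φ sharp N * tp φ sharp R = tp φ sharp (b :: g)) := by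
  induction n with
  | zero =>
    intro b g hg hgood h1 h2 hc hb
    obtain rfl : g = [] := by simpa using hg
    have hc' : ACuts φ sharp S s [b] := by
      intro f c g hf e
      have := congrArg List.length e
      have h3 := List.length_pos_iff.2 hf
      simp at this; omega
    rcases IH s [b] (by simp) hgood h1 h2 hc' with ⟨t, htg, htw, htt⟩ | ⟨L, hL0, hL, hLw⟩
    · exact ⟨[], [t], by simp, by simpa using htg, by simp, by simp, by rw [← htw]; simp [DTree.wordList],
        fun _ => ⟨by simp, by rw [← htt]; simp [tp]⟩⟩
    · refine ⟨L, [], by simp, by simp, fun t ht => (hL t ht).1, fun t ht => Or.inr (hL t ht).2,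
        by rw [← hLw]; simp [DTree.wordList], fun h => ?_⟩
      obtain ⟨t, ht⟩ := List.exists_mem_of_ne_nil L hL0
      exact absurd (hL t ht).2 (h t ht).2.2.1
  | succ n ih =>
    intro b g hg hgood h1 h2 hc hb
    rcases first_cut φ sharp S (s, ρ) s (b :: g) hc with hc' | ⟨f, c, g', hf0, hl, hcf, he⟩
    · rcases IH s (b :: g) (by simp) hgood h1 h2 hc' with ⟨t, htg, htw, htt⟩ | ⟨L, hL0, hL, hLw⟩
      · exact ⟨[], [t], by simp, by simpa using htg, by simp, by simp, by rw [← htw]; simp [DTree.wordList],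
          fun _ => ⟨by simp, by rw [← htt]; simp [tp]⟩⟩
      · refine ⟨L, [], by simp, by simp, fun t ht => (hL t ht).1, fun t ht => Or.inr (hL t ht).2,
          by rw [← hLw]; simp [DTree.wordList], fun h => ?_⟩
        obtain ⟨t, ht⟩ := List.exists_mem_of_ne_nil L hL0
        exact absurd (hL t ht).2 (h t ht).2.2.1
    · rw [Prod.mk.injEq] at he
      obtain ⟨he1, he2⟩ := he
      have hlen : g'.length ≤ n := by
        have := congrArg List.length hl
        have h3 := List.length_pos_iff.2 hf0
        simp at this; omega
      obtain ⟨f', rfl⟩ : ∃ f', f = b :: f' := by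
        cases f with
        | nil => exact absurd rfl hf0
        | cons x f' => simp at hl; exact ⟨f', by rw [hl.1]⟩
      rw [hl] at hgood h1 h2 hc ⊢
      rw [tp_append] at h1 h2
      have hfI : tp φ sharp (b :: f') ∉ I' := fun hh => h1 (C.mulR' hh _)
      have hgI : tp φ sharp (c :: g') ∉ I' := fun hh => h1 (C.mulL' hh _)
      rw [← mul_assoc] at h2
      have hsf : s * tp φ sharp (b :: f') ∉ I' := fun hh => h2 (C.mulR' hh _)
      have hcr := hc.right
      rw [he1] at h2 hcr
      obtain ⟨N, R, a1, a2, a3, a4, a5, a6⟩ := ih c g' hlen (fun t ht => hgood t (by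
        rw [List.mem_append]; exact Or.inr ht)) hgI h2 hcr he2
      have hAP : AP I I' s ρ (tp φ sharp (b :: f')) := by
        refine ⟨he1, C.tp_mem φ _ (by simp) (fun t ht => (hgood t (by
          rw [List.mem_append]; exact Or.inl ht)).2), hfI, ?_⟩
        rw [tp_cons] at hfI ⊢
        rw [AR_mul sharp C _ _ (hgood b (by simp)).2 hfI, hb]
      rcases IH s (b :: f') (by simp) (fun t ht => hgood t (by
        rw [List.mem_append]; exact Or.inl ht)) hfI hsf hcf with ⟨t, htg, htw, htt⟩ | ⟨L, hL0, hL, hLw⟩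
      · refine ⟨t :: N, R, a1, a2, ?_, ?_, ?_, ?_⟩
        · simpa using ⟨htg, a3⟩
        · simp only [List.mem_cons, forall_eq_or_imp]
          exact ⟨Or.inl (htt ▸ hAP), a4⟩
        · rw [wl_append, ← a5, ← htw]; simp [DTree.wordList]
        · intro hall
          obtain ⟨c1, c2⟩ := a6 (fun t ht => hall t (by simp [ht]))
          refine ⟨c1, ?_⟩
          rw [tp_append, ← c2, tp_cons, htt, mul_assoc]
      · refine ⟨L ++ N, R, a1, a2, ?_, ?_, ?_, ?_⟩
        · intro t ht
          rcases List.mem_append.1 ht with ht | ht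
          · exact (hL t ht).1
          · exact a3 t ht
        · intro t ht
          rcases List.mem_append.1 ht with ht | ht
          · exact Or.inr (hL t ht).2
          · exact a4 t ht
        · rw [wl_append, wl_append, ← a5, hLw]; simp
        · intro hall
          obtain ⟨t, ht⟩ := List.exists_mem_of_ne_nil L hL0
          exact absurd (hL t ht).2 (hall t (by simp [ht])).2.2.1

open Classical in
theorem seg [Finite M] {I I' : Set M} (C : ACtx sharp I I') (h0 : ℕ) (S : Finset (M × Set M)) :
    ∀ s l, l ≠ [] → (∀ t ∈ l, AGood φ sharp k h0 t ∧ t.typ φ sharp ∈ I) → tp φ sharp l ∉ I' →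
      s * tp φ sharp l ∉ I' → ACuts φ sharp (S : Set (M × Set M)) s l →
      AOut φ sharp k I' (h0 + 4 * S.card) l := by
  induction S using Finset.induction_on with
  | empty =>
    intro s l hl hg h1 h2 hc
    rcases l with _ | ⟨a, _ | ⟨b, l⟩⟩
    · exact absurd rfl hl
    · exact Or.inl ⟨a, by simpa using (hg a (by simp)).1, (wl_single a).symm, (tp_single φ sharp a).symm⟩
    · have := hc [a] b l (by simp) rfl
      simp at this
  | insert c S hcS IH =>
    intro s l hl hg h1 h2 hc
    rw [Finset.card_insert_of_notMem hcS]
    rw [Finset.coe_insert] at hc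
    rcases first_cut φ sharp _ c s l hc with hc' | ⟨f, b, g, hf0, rfl, hcf, he⟩
    · rcases IH s l hl hg h1 h2 hc' with ⟨t, htg, htw, htt⟩ | ⟨L, hL0, hL, hLw⟩
      · exact Or.inl ⟨t, htg.mono (by omega), htw, htt⟩
      · exact Or.inr ⟨L, hL0, fun t ht => ⟨(hL t ht).1.mono (by omega), (hL t ht).2⟩, hLw⟩
    · have hgf : ∀ t ∈ f, AGood φ sharp k h0 t ∧ t.typ φ sharp ∈ I := fun t ht => hg t (by simp [ht])
      have hgg : ∀ t ∈ b :: g, AGood φ sharp k h0 t ∧ t.typ φ sharp ∈ I := fun t ht => hg t (by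
        rw [List.mem_append]; exact Or.inr ht)
      rw [tp_append] at h1 h2
      have hfI : tp φ sharp f ∉ I' := fun hh => h1 (C.mulR' hh _)
      have hgI : tp φ sharp (b :: g) ∉ I' := fun hh => h1 (C.mulL' hh _)
      rw [← mul_assoc] at h2
      have hsf : s * tp φ sharp f ∉ I' := fun hh => h2 (C.mulR' hh _)
      have hsI : s * tp φ sharp f ∈ I := C.mulL (C.tp_mem φ f hf0 fun t ht => (hgf t ht).2) _
      subst he
      obtain ⟨N, R, a1, a2, a3, a4, a5, a6⟩ := gdecomp φ sharp k C h0 _ _ (s * tp φ sharp f)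
        (AR (b.typ φ sharp)) IH g.length b g le_rfl hgg hgI h2 hc.right rfl
      have := combine φ sharp k C (AP I I' (s * tp φ sharp f) (AR (b.typ φ sharp)))
        (AP_uniq sharp C _ _ hsI hsf) (fun m hm => AP_L sharp C _ _ hsI hsf m m hm hm.1)
        (fun m hm => C.sh m hm.2.1 hm.2.2.1 (AP_L sharp C _ _ hsI hsf m m hm hm.1))
        (h0 + 4 * S.card) f (b :: g) N R (IH s f hf0 hgf hfI hsf hcf) a1 a2 a3 a4 a5 a6
      exact this

theorem AOut.mono {φ : A → M} {sharp : M → M} {k : ℕ} {I' : Set M} {h h' : ℕ} {l : List (DTree A M)}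
    (H : AOut φ sharp k I' h l) (hh : h ≤ h') : AOut φ sharp k I' h' l := by
  rcases H with ⟨t, htg, htw, htt⟩ | ⟨L, hL0, hL, hLw⟩
  · exact Or.inl ⟨t, htg.mono hh, htw, htt⟩
  · exact Or.inr ⟨L, hL0, fun t ht => ⟨(hL t ht).1.mono hh, (hL t ht).2⟩, hLw⟩

def ALab (I I' : Set M) (a : M) : Set (M × Set M) :=
  {p | p.1 ∈ I ∧ p.1 ∉ I' ∧ p.1 ∈ AR a ∧ ∃ b ∈ I, b ∉ I' ∧ AR b = p.2}

theorem lab_card [Finite M] {I I' : Set M} (C : ACtx sharp I I') (a : M) (ha : a ∈ I) (ha' : a ∉ I') :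
    (ALab I I' a).ncard ≤ (I \ I').ncard := by
  have key : ∀ ρ : Set M, ∃ c d : M, (∃ b ∈ I, b ∉ I' ∧ AR b = ρ) → ∀ x ∈ I, x ∉ I' → x ∈ AR a →
      d * (c * x) = x ∧ c * x ∈ I ∧ c * x ∉ I' ∧ AR (c * x) = ρ := by
    intro ρ
    by_cases hρ : ∃ b ∈ I, b ∉ I' ∧ AR b = ρ
    swap
    · exact ⟨1, 1, fun h => absurd h hρ⟩
    obtain ⟨b, hb, hb', rfl⟩ := hρ
    obtain ⟨α, β, e⟩ := C.J a ha ha' b hb hb'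
    have e' : a = α * (b * β) := by rw [e, mul_assoc]
    have hbβ : b * β ∉ I' := fun hh => ha' (by rw [e']; exact C.mulL' hh _)
    obtain ⟨α', β', e2⟩ := C.J (b * β) (C.mulR hb _) hbβ a ha ha'
    rw [e'] at e2
    obtain ⟨c, hc⟩ := aux_stabL _ _ _ _ e2
    rw [← e'] at hc
    refine ⟨c, α, fun _ x hx hx' ⟨y, hy⟩ => ?_⟩
    have h1 : c * x = b * (β * y) := by rw [hy, ← mul_assoc, ← hc, mul_assoc]
    have h2 : α * (c * x) = x := by rw [h1, hy, e']; simp only [mul_assoc]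
    have h3 : c * x ∉ I' := fun hh => hx' (by rw [← h2]; exact C.mulL' hh _)
    refine ⟨h2, C.mulL hx _, h3, ?_⟩
    rw [h1] at h3 ⊢
    exact AR_mul sharp C _ _ hb h3
  choose c d hcd using key
  refine Set.ncard_le_ncard_of_injOn (fun p => c p.2 * p.1) ?_ ?_ (Set.toFinite _)
  · rintro ⟨x, ρ⟩ ⟨h1, h2, h3, h4⟩
    have := hcd ρ h4 x h1 h2 h3
    exact ⟨this.2.1, this.2.2.1⟩
  · rintro ⟨x, ρ⟩ ⟨h1, h2, h3, h4⟩ ⟨x', ρ'⟩ ⟨h1', h2', h3', h4'⟩ e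
    have A1 := hcd ρ h4 x h1 h2 h3
    have A2 := hcd ρ' h4' x' h1' h2' h3'
    simp only at e
    have hρ : ρ = ρ' := by rw [← A1.2.2.2, e, A2.2.2.2]
    subst hρ
    have hx : x = x' := by rw [← A1.1, e, A2.1]
    rw [hx]

theorem segJ [Finite M] {I I' : Set M} (C : ACtx sharp I I') (h0 : ℕ) (l : List (DTree A M)) (hl : l ≠ [])
    (hg : ∀ t ∈ l, AGood φ sharp k h0 t ∧ t.typ φ sharp ∈ I) (h1 : tp φ sharp l ∉ I') :
    AOut φ sharp k I' (h0 + 4 * (I \ I').ncard) l := by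
  cases l with
  | nil => exact absurd rfl hl
  | cons a l =>
    have haI := (hg a (by simp)).2
    have haI' : a.typ φ sharp ∉ I' := fun hh => h1 (by rw [tp_cons]; exact C.mulR' hh _)
    have hcard := lab_card sharp C _ haI haI'
    have hfin : (ALab I I' (a.typ φ sharp)).Finite := Set.toFinite _
    rw [Set.ncard_eq_toFinset_card _ hfin] at hcard
    refine (seg φ sharp k C h0 hfin.toFinset 1 (a :: l) hl hg h1 (by simpa using h1) ?_).mono (by omega)
    rw [Set.Finite.coe_toFinset]
    intro f b g hf e
    rw [e] at h1 hg
    rw [tp_append] at h1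
    have hf' : tp φ sharp f ∉ I' := fun hh => h1 (C.mulR' hh _)
    rw [one_mul]
    refine ⟨C.tp_mem φ f hf (fun t ht => (hg t (by simp [ht])).2), hf', ?_, b.typ φ sharp,
      (hg b (by simp)).2, fun hh => h1 (C.mulL' (by rw [tp_cons]; exact C.mulR' hh _) _), rfl⟩
    cases f with
    | nil => exact absurd rfl hf
    | cons x f =>
      simp only [List.cons_append, List.cons.injEq] at e
      exact ⟨tp φ sharp f, by rw [tp_cons, e.1]⟩

/-- segmentation into maximal segments -/
theorem segs {I I' : Set M} (C : ACtx sharp I I') (l : List (DTree A M)) : 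
    ∃ Ss : List (List (DTree A M)), Ss.flatten = l ∧
      (∀ S ∈ Ss, S ≠ [] ∧ (tp φ sharp S ∉ I' ∨ ∃ x, S = [x] ∧ x.typ φ sharp ∈ I')) ∧
      Ss.IsChain (fun S S' => tp φ sharp S * tp φ sharp S' ∈ I') := by
  induction l with
  | nil => exact ⟨[], by simp⟩
  | cons a l ih =>
    obtain ⟨Ss, hfl, hS, hch⟩ := ih
    have hsing : [a] ≠ [] ∧ (tp φ sharp [a] ∉ I' ∨ ∃ x, [a] = [x] ∧ x.typ φ sharp ∈ I') := by
      refine ⟨by simp, ?_⟩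
      by_cases h : a.typ φ sharp ∈ I'
      · exact Or.inr ⟨a, rfl, h⟩
      · left; rwa [tp_single]
    cases Ss with
    | nil => 
      refine ⟨[[a]], by simpa using hfl, ?_, by simp⟩
      intro S hS
      rw [List.mem_singleton.1 hS]; exact hsing
    | cons S Ss =>
      by_cases h : tp φ sharp [a] * tp φ sharp S ∈ I'
      · refine ⟨[a] :: S :: Ss, by rw [← hfl]; simp, ?_, ?_⟩
        · intro T hT
          rcases List.mem_cons.1 hT with rfl | hT
          · exact hsing
          · exact hS T hT
        · rw [List.isChain_cons_cons]; exact ⟨h, hch⟩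
      · refine ⟨([a] ++ S) :: Ss, by rw [← hfl]; simp, ?_, ?_⟩
        · intro T hT
          rcases List.mem_cons.1 hT with rfl | hT
          · exact ⟨by simp, Or.inl (by rwa [tp_append])⟩
          · exact hS T (by simp [hT])
        · cases Ss with
          | nil => simp
          | cons S' Ss =>
            rw [List.isChain_cons_cons] at hch ⊢
            refine ⟨?_, hch.2⟩
            rw [tp_append, mul_assoc]
            exact C.mulL' hch.1 _

theorem outs {I I' : Set M} (C : ACtx sharp I I') (h0 H : ℕ) (h0H : h0 ≤ H)
    (hseg : ∀ l : List (DTree A M), l ≠ [] → (∀ t ∈ l, AGood φ sharp k h0 t ∧ t.typ φ sharp ∈ I) →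
      tp φ sharp l ∉ I' → AOut φ sharp k I' H l)
    (Ss : List (List (DTree A M))) : ∀ S : List (DTree A M),
      (∀ t ∈ (S :: Ss).flatten, AGood φ sharp k h0 t ∧ t.typ φ sharp ∈ I) →
      (∀ S' ∈ S :: Ss, S' ≠ [] ∧ (tp φ sharp S' ∉ I' ∨ ∃ x, S' = [x] ∧ x.typ φ sharp ∈ I')) →
      (S :: Ss).IsChain (fun S S' => tp φ sharp S * tp φ sharp S' ∈ I') →
      ∃ t T, (∀ x ∈ t :: T, AGood φ sharp k H x) ∧
        (t :: T).IsChain (fun x y => x.typ φ sharp * y.typ φ sharp ∈ I') ∧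
        DTree.wordList (t :: T) = DTree.wordList (S :: Ss).flatten ∧
        (t.typ φ sharp ∈ I' ∨ t.typ φ sharp = tp φ sharp S) := by
  have hout : ∀ S : List (DTree A M), (∀ t ∈ S, AGood φ sharp k h0 t ∧ t.typ φ sharp ∈ I) → 
      (S ≠ [] ∧ (tp φ sharp S ∉ I' ∨ ∃ x, S = [x] ∧ x.typ φ sharp ∈ I')) → AOut φ sharp k I' H S := by
    rintro S hg ⟨hS0, hS | ⟨x, rfl, hx⟩⟩
    · exact hseg S hS0 hg hS
    · exact Or.inl ⟨x, (hg x (by simp)).1.mono h0H, (wl_single x).symm, (tp_single _ _ x).symm⟩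
  -- prepending a list of low trees
  have happ : ∀ L T : List (DTree A M), (∀ t ∈ L, t.typ φ sharp ∈ I') →
      T.IsChain (fun x y => x.typ φ sharp * y.typ φ sharp ∈ I') →
      (L ++ T).IsChain (fun x y => x.typ φ sharp * y.typ φ sharp ∈ I') := by
    intro L T hL hT
    induction L with
    | nil => simpa using hT
    | cons a L ih =>
      rw [List.cons_append, List.isChain_cons]
      exact ⟨fun y _ => C.mulR' (hL a (by simp)) _, ih fun t ht => hL t (by simp [ht])⟩
  induction Ss with
  | nil =>
    intro S hg hS _
    have hgS : ∀ t ∈ S, AGood φ sharp k h0 t ∧ t.typ φ sharp ∈ I := by simpa using hg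
    rcases hout S hgS (hS S (by simp)) with ⟨t, htg, htw, htt⟩ | ⟨L, hL0, hL, hLw⟩
    · exact ⟨t, [], by simpa using htg, by simp, by rw [wl_single, htw]; simp, Or.inr htt⟩
    · obtain ⟨t, T, rfl⟩ := List.exists_cons_of_ne_nil hL0
      refine ⟨t, T, fun x hx => (hL x hx).1, ?_, by rw [hLw]; simp, Or.inl (hL t (by simp)).2⟩
      simpa using happ (t :: T) [] (fun x hx => (hL x hx).2) (by simp)
  | cons S2 Ss ih =>
    intro S hg hS hch
    rw [List.isChain_cons_cons] at hch
    have hgS : ∀ t ∈ S, AGood φ sharp k h0 t ∧ t.typ φ sharp ∈ I := fun t ht => hg t (by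
      rw [List.flatten_cons, List.mem_append]; exact Or.inl ht)
    obtain ⟨t2, T2, b1, b2, b3, b4⟩ := ih S2 (fun t ht => hg t (by
      rw [List.flatten_cons, List.mem_append]; exact Or.inr ht))
      (fun S' hS' => hS S' (List.mem_cons_of_mem _ hS')) hch.2
    have hw : DTree.wordList (S :: S2 :: Ss).flatten =
        DTree.wordList S ++ DTree.wordList (t2 :: T2) := by
      rw [b3, List.flatten_cons, wl_append]
    rw [hw]
    rcases hout S hgS (hS S (by simp)) with ⟨t, htg, htw, htt⟩ | ⟨L, hL0, hL, hLw⟩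
    · refine ⟨t, t2 :: T2, ?_, ?_, by rw [← htw]; rfl, Or.inr htt⟩
      · intro x hx
        rcases List.mem_cons.1 hx with rfl | hx
        · exact htg
        · exact b1 x hx
      · rw [List.isChain_cons_cons]
        refine ⟨?_, b2⟩
        rcases b4 with b4 | b4
        · exact C.mulL' b4 _
        · rw [htt, b4]; exact hch.1
    · obtain ⟨t, T, rfl⟩ := List.exists_cons_of_ne_nil hL0
      refine ⟨t, T ++ t2 :: T2, ?_, ?_, ?_, Or.inl (hL t (by simp)).2⟩
      · intro x hx
        rw [← List.cons_append, List.mem_append] at hx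
        exact hx.elim (fun hx => (hL x hx).1) (b1 x)
      · exact happ (t :: T) (t2 :: T2) (fun x hx => (hL x hx).2) b2
      · rw [← hLw, ← wl_append]; rfl

theorem pairing {I I' : Set M} (C : ACtx sharp I I') (H : ℕ) (n : ℕ) : ∀ (a b : DTree A M) (T : List (DTree A M)),
    T.length ≤ n → (∀ x ∈ a :: b :: T, AGood φ sharp k H x) →
    (a :: b :: T).IsChain (fun x y => x.typ φ sharp * y.typ φ sharp ∈ I') →
    ∃ L, L ≠ [] ∧ (∀ t ∈ L, AGood φ sharp k (H + 2) t ∧ t.typ φ sharp ∈ I') ∧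
      DTree.wordList L = DTree.wordList (a :: b :: T) := by
  induction n using Nat.strong_induction_on with
  | _ n ih =>
    intro a b T hT hg hch
    rw [List.isChain_cons_cons] at hch
    have hab : AGood φ sharp k (H + 1) (.prod a b) :=
      (hg a (by simp)).prod (hg b (by simp)) (by omega) (by omega)
    have habI : (DTree.prod a b).typ φ sharp ∈ I' := hch.1
    rcases T with _ | ⟨c, _ | ⟨d, T⟩⟩
    · refine ⟨[.prod a b], by simp, ?_, by simp [DTree.wordList, DTree.word]⟩
      simp only [List.mem_singleton, forall_eq]
      exact ⟨hab.mono (by omega), habI⟩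
    · refine ⟨[.prod (.prod a b) c], by simp, ?_, by simp [DTree.wordList, DTree.word]⟩
      simp only [List.mem_singleton, forall_eq]
      exact ⟨hab.prod (hg c (by simp)) (by omega) (by omega), C.mulR' habI _⟩
    · simp only [List.length_cons] at hT
      obtain ⟨L, hL0, hL, hLw⟩ := ih T.length (by omega) c d T le_rfl
        (fun x hx => hg x (by simp only [List.mem_cons] at hx ⊢; tauto))
        (by have := hch.2; rw [List.isChain_cons_cons] at this; exact this.2)
      refine ⟨.prod a b :: L, by simp, ?_, ?_⟩
      · intro t ht
        rcases List.mem_cons.1 ht with rfl | ht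
        · exact ⟨hab.mono (by omega), habI⟩
        · exact hL t ht
      · simp only [DTree.wordList, DTree.word, List.append_assoc] at hLw ⊢
        rw [hLw]

theorem stage [Finite M] {I I' : Set M} (C : ACtx sharp I I') (h0 : ℕ) (l : List (DTree A M)) (hl : l ≠ [])
    (hg : ∀ t ∈ l, AGood φ sharp k h0 t ∧ t.typ φ sharp ∈ I) :
    (∃ t, AGood φ sharp k (h0 + 4 * (I \ I').ncard) t ∧ t.word = DTree.wordList l) ∨
    ∃ L, L ≠ [] ∧ (∀ t ∈ L, AGood φ sharp k (h0 + 4 * (I \ I').ncard + 2) t ∧ t.typ φ sharp ∈ I') ∧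
      DTree.wordList L = DTree.wordList l := by
  obtain ⟨Ss, rfl, hS, hch⟩ := segs φ sharp C l
  cases Ss with
  | nil => simp at hl
  | cons S Ss =>
    obtain ⟨t, T, b1, b2, b3, -⟩ := outs φ sharp k C h0 (h0 + 4 * (I \ I').ncard) (by omega)
      (segJ φ sharp k C h0) Ss S hg hS hch
    cases T with
    | nil => exact Or.inl ⟨t, b1 t (by simp), by rw [← b3, wl_single]⟩
    | cons t' T =>
      right
      rw [← b3]
      exact pairing φ sharp k C _ _ t t' T le_rfl b1 b2

theorem final [Finite M]
    (hsh : ∀ E : M, E * E = E → E * sharp E = sharp E)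
    (hJ : ∀ E : M, E * E = E → sharp E ≠ E →
      {x : M | ∃ m m' : M, x = m * sharp E * m'} ≠ {x : M | ∃ m m' : M, x = m * E * m'}) (n : ℕ) :
    ∀ (I : Set M) (h0 : ℕ) (l : List (DTree A M)), I.ncard ≤ n →
      (∀ x ∈ I, ∀ m m', m * x * m' ∈ I) → l ≠ [] →
      (∀ t ∈ l, AGood φ sharp k h0 t ∧ t.typ φ sharp ∈ I) →
      ∃ t, DTree.Valid φ sharp k t ∧ t.height + 2 ≤ h0 + 6 * I.ncard ∧ t.word = DTree.wordList l := by
  induction n with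
  | zero =>
    intro I h0 l hn _ hl hg
    have : I = ∅ := by rwa [Nat.le_zero, Set.ncard_eq_zero (Set.toFinite _)] at hn
    obtain ⟨t, ht⟩ := List.exists_mem_of_ne_nil l hl
    have := (hg t ht).2
    simp_all
  | succ n ih =>
    intro I h0 l hn hI hl hg
    obtain ⟨t0, ht0⟩ := List.exists_mem_of_ne_nil l hl
    set K : M → Set M := fun x => {y | ∃ m m', y = m * x * m'} with hK
    have hKself : ∀ x, x ∈ K x := fun x => ⟨1, 1, by simp⟩
    have hKsub : ∀ x y, x ∈ K y → K x ⊆ K y := by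
      rintro x y ⟨m, m', rfl⟩ z ⟨p, p', rfl⟩
      exact ⟨p * m, m' * p', by simp only [mul_assoc]⟩
    obtain ⟨b, hbI, hbmax⟩ : ∃ b ∈ I, ∀ x ∈ I, K b ⊆ K x → K x ⊆ K b := by
      obtain ⟨b, hb⟩ := Set.Finite.exists_maximalFor K I (Set.toFinite _) ⟨_, (hg t0 ht0).2⟩
      exact ⟨b, hb.1, fun x hx h => hb.2 hx h⟩
    set I' : Set M := {x ∈ I | K x ≠ K b} with hI'
    have hmemJ : ∀ x ∈ I, x ∉ I' → K x = K b := by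
      intro x hx hx'
      by_contra h
      exact hx' ⟨hx, h⟩
    have C : ACtx sharp I I' := by
      refine ⟨hI, ?_, fun x hx => hx.1, ?_, ?_⟩
      · rintro x ⟨hx, hxb⟩ m m'
        refine ⟨hI x hx m m', fun h => hxb ?_⟩
        have h1 : K b ⊆ K x := by rw [← h]; exact hKsub _ _ ⟨m, m', rfl⟩
        exact Set.Subset.antisymm (hbmax x hx h1) h1
      · intro x hx hx' y hy hy'
        have : x ∈ K y := by rw [hmemJ y hy hy', ← hmemJ x hx hx']; exact hKself x
        exact this
      · intro x hx hx' hxx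
        by_cases h : sharp x = x
        · exact Or.inl h
        right
        refine ⟨?_, ?_⟩
        · have := hI x hx 1 (sharp x)
          rwa [one_mul, hsh x hxx] at this
        · rw [← hmemJ x hx hx']
          exact hJ x hxx h
    have hcard : (I \ I').ncard + I'.ncard = I.ncard :=
      Set.ncard_sdiff_add_ncard_of_subset C.sub (Set.toFinite _)
    have hpos : 0 < (I \ I').ncard := by
      rw [Set.ncard_pos (Set.toFinite _)]
      exact ⟨b, hbI, fun h => h.2 rfl⟩
    rcases stage φ sharp k C h0 l hl hg with ⟨t, ht, htw⟩ | ⟨L, hL0, hL, hLw⟩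
    · refine ⟨t, ht.1, ?_, htw⟩
      have := ht.2
      omega
    · obtain ⟨t, h1, h2, h3⟩ := ih I' _ L (by omega) C.idl' hL0 hL
      exact ⟨t, h1, by omega, h3.trans hLw⟩

end Aux

theorem k_decomposition_tree_exists {A M : Type*} [Monoid M] [Fintype M]
    (φ : A → M) (sharp : M → M)
    (h_idem : ∀ E : M, E * E = E → sharp E * sharp E = sharp E)
    (h_sharp_sharp : ∀ E : M, E * E = E → sharp (sharp E) = sharp E)
    (h_abs_left : ∀ E : M, E * E = E → E * sharp E = sharp E)
    (h_abs_right : ∀ E : M, E * E = E → sharp E * E = sharp E)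
    (h_J_decrease : ∀ E : M, E * E = E → sharp E ≠ E →
      {x : M | ∃ m m' : M, x = m * sharp E * m'} ⊆ {x : M | ∃ m m' : M, x = m * E * m'} ∧
      {x : M | ∃ m m' : M, x = m * sharp E * m'} ≠ {x : M | ∃ m m' : M, x = m * E * m'}) :
    ∀ w : List A, w ≠ [] → ∀ k : ℕ, k > 3 →
      ∃ T : DTree A M, DTree.Valid φ sharp k T ∧ T.word = w ∧
        T.height ≤ 3 * (Fintype.card M) ^ 2 := by
  intro w hw k hk
  set l : List (DTree A M) := w.map DTree.leaf with hl
  have hl0 : l ≠ [] := by simpa [hl] using hw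
  have hlw : DTree.wordList l = w := by
    rw [hl]
    clear hl hl0 hw l
    induction w with
    | nil => rfl
    | cons a w ih => simp [DTree.wordList, DTree.word, ih]
  have hgood : ∀ t ∈ l, AGood φ sharp k 1 t := by
    intro t ht
    obtain ⟨a, -, rfl⟩ := List.mem_map.1 ht
    exact ⟨.leaf a, by simp [DTree.height]⟩
  have hcpos : 0 < Fintype.card M := Fintype.card_pos_iff.2 ⟨1⟩
  by_cases h1 : Fintype.card M = 1
  · have hs : Subsingleton M := Fintype.card_le_one_iff_subsingleton.1 h1.le
    obtain ⟨t, ht, htw, -⟩ := block φ sharp k (∅ : Set M) (fun _ => True) (fun _ _ _ _ => Subsingleton.elim _ _)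
      (fun _ _ => Subsingleton.elim _ _) (fun _ _ => Or.inl (Subsingleton.elim _ _)) 1 l hl0 hgood
      (fun _ _ => trivial)
    refine ⟨t, ht.1, htw.trans hlw, ?_⟩
    have := ht.2
    rw [h1]; omega
  · obtain ⟨t, ht, hth, htw⟩ := final φ sharp k h_abs_left (fun E hE hne => (h_J_decrease E hE hne).2)
      _ Set.univ 1 l le_rfl (by simp) hl0 (fun t ht => ⟨hgood t ht, trivial⟩)
    refine ⟨t, ht, htw.trans hlw, ?_⟩
    rw [Set.ncard_univ, Nat.card_eq_fintype_card] at hth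
    have : 2 ≤ Fintype.card M := by omega
    nlinarith
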